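/- arXiv:math-ph/0411052 — 4 statements merged into one kernel-verified Lean document; each statement's English description precedes it below -/
import Mathlib

section
/- Let φ ∈ ℝ with φ/π irrational, let R_φ : ℝ² → ℝ² be the rotation through angle φ about the origin, and let Γ = ℤa + ℤb where a, b is an ℝ-basis of ℝ². Then ⋂_{m∈ℤ} R_φ^m Γ = {0}; in particular any vector lying in R_φ^m Γ for every m ∈ ℤ is zero. -/
/-- The rotation of `ℝ²` through angle `θ` about the origin. -/
noncomputable def rot2 (θ : ℝ) (p : ℝ × ℝ) : ℝ × ℝ :=
  (Real.cos θ * p.1 - Real.sin θ * p.2, Real.sin θ * p.1 + Real.cos θ * p.2)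

/-- If `φ/π` is irrational, `R_φ` is the rotation through `φ`, and
`Γ = ℤa + ℤb` is a lattice in `ℝ²`, then `⋂_{m∈ℤ} R_φ^m Γ = {0}`: any vector lying in
`R_φ^m Γ` (i.e. in `rot2 (m*φ) '' Γ`) for every `m ∈ ℤ` is zero. -/
theorem inter_rot_lattice_eq_zero
    (φ : ℝ) (hφ : Irrational (φ / Real.pi))
    (a b : ℝ × ℝ) (hab : LinearIndependent ℝ ![a, b])
    (Γ : Set (ℝ × ℝ))
    (hΓ : Γ = {x | ∃ m n : ℤ, x = (m : ℝ) • a + (n : ℝ) • b})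
    (x : ℝ × ℝ) (hx : ∀ m : ℤ, x ∈ rot2 (m * φ) '' Γ) :
    x = 0 := by
  subst hΓ
  have hD : a.1 * b.2 - a.2 * b.1 ≠ 0 := by
    intro h
    rw [LinearIndependent.pair_iff] at hab
    have h1 := hab b.2 (-a.2) (by
      ext <;> simp <;> linarith)
    have h2 := hab b.1 (-a.1) (by
      ext <;> simp <;> linarith)
    have ha : a = 0 := by
      ext
      · simpa using h2.2
      · simpa using h1.2
    have h3 := hab 1 0 (by simp [ha])
    exact one_ne_zero h3.1
  have hx' : ∀ m : ℤ, ∃ p q : ℤ, x = rot2 (m * φ) ((p : ℝ) • a + (q : ℝ) • b) := by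
    intro m
    obtain ⟨y, ⟨p, q, rfl⟩, hy⟩ := hx m
    exact ⟨p, q, hy.symm⟩
  choose p q hpq using hx'
  set D := a.1 * b.2 - a.2 * b.1 with hDdef
  have hD2 : 0 < D ^ 2 := by positivity
  set C := (x.1 ^ 2 + x.2 ^ 2) * (a.1 ^ 2 + a.2 ^ 2 + b.1 ^ 2 + b.2 ^ 2) with hC
  have key : ∀ m : ℤ, ∀ y : ℝ × ℝ, x = rot2 (m * φ) y →
      x.1 ^ 2 + x.2 ^ 2 = y.1 ^ 2 + y.2 ^ 2 := by
    intro m y hy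
    rw [hy]
    simp only [rot2]
    linear_combination (y.1 ^ 2 + y.2 ^ 2) * Real.sin_sq_add_cos_sq (m * φ)
  have bound : ∀ r : ℤ, ((r : ℝ) * D) ^ 2 ≤ C → r ∈ Set.Icc (-⌊C / D ^ 2⌋) ⌊C / D ^ 2⌋ := by
    intro r hr
    have h1 : r ^ 2 ≤ ⌊C / D ^ 2⌋ := by
      rw [Int.le_floor, le_div_iff₀ hD2]
      push_cast
      linarith [mul_pow (r : ℝ) D 2]
    have h2 : |r| ≤ r ^ 2 := by
      rcases eq_or_ne r 0 with h | h
      · simp [h]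
      · have := Int.one_le_abs h
        nlinarith [sq_abs r]
    exact abs_le.mp (h2.trans h1)
  have hmaps : Set.MapsTo (fun m => (p m, q m)) Set.univ
      (Set.Icc (-⌊C / D ^ 2⌋) ⌊C / D ^ 2⌋ ×ˢ Set.Icc (-⌊C / D ^ 2⌋) ⌊C / D ^ 2⌋) := by
    intro m _
    have hk := key m _ (hpq m)
    set y := (p m : ℝ) • a + (q m : ℝ) • b with hy
    have y1 : y.1 = p m * a.1 + q m * b.1 := by simp [hy]
    have y2 : y.2 = p m * a.2 + q m * b.2 := by simp [hy]
    constructor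
    · apply bound
      have e : (p m : ℝ) * D = y.1 * b.2 - y.2 * b.1 := by rw [y1, y2, hDdef]; ring
      rw [e, hC, hk]
      have : 0 ≤ (y.1 ^ 2 + y.2 ^ 2) * (a.1 ^ 2 + a.2 ^ 2) := by positivity
      nlinarith [sq_nonneg (y.1 * b.1 + y.2 * b.2)]
    · apply bound
      have e : (q m : ℝ) * D = y.2 * a.1 - y.1 * a.2 := by rw [y1, y2, hDdef]; ring
      rw [e, hC, hk]
      have : 0 ≤ (y.1 ^ 2 + y.2 ^ 2) * (b.1 ^ 2 + b.2 ^ 2) := by positivity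
      nlinarith [sq_nonneg (y.1 * a.1 + y.2 * a.2)]
  obtain ⟨m, _, n, _, hmn, he⟩ := Set.Infinite.exists_ne_map_eq_of_mapsTo
    (Set.infinite_univ (α := ℤ)) hmaps ((Set.finite_Icc _ _).prod (Set.finite_Icc _ _))
  simp only [Prod.mk.injEq] at he
  have hm := hpq m
  have hn := hpq n
  rw [← he.1, ← he.2] at hn
  have hk := key m _ hm
  generalize (p m : ℝ) • a + (q m : ℝ) • b = y at hm hn hk
  by_contra hx0
  have hpos : x.1 ^ 2 + x.2 ^ 2 ≠ 0 := by
    intro h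
    apply hx0
    ext
    · simp only [Prod.fst_zero]; nlinarith [sq_nonneg x.1, sq_nonneg x.2]
    · simp only [Prod.snd_zero]; nlinarith [sq_nonneg x.1, sq_nonneg x.2]
  rw [hk] at hpos
  have hmn' := hm.symm.trans hn
  simp only [rot2, Prod.mk.injEq] at hmn'
  obtain ⟨e1, e2⟩ := hmn'
  have hcos : Real.cos (m * φ) = Real.cos (n * φ) := by
    apply mul_right_cancel₀ hpos
    linear_combination y.1 * e1 + y.2 * e2
  have hsin : Real.sin (m * φ) = Real.sin (n * φ) := by
    apply mul_right_cancel₀ hpos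
    linear_combination y.1 * e2 - y.2 * e1
  have h1 : Real.cos (m * φ - n * φ) = 1 := by
    rw [Real.cos_sub, hcos, hsin]
    linear_combination Real.sin_sq_add_cos_sq (n * φ)
  obtain ⟨k, hk⟩ := (Real.cos_eq_one_iff _).mp h1
  apply hφ
  refine ⟨(2 * k : ℚ) / ((m : ℚ) - n), ?_⟩
  have hne : (m : ℝ) - n ≠ 0 := sub_ne_zero.mpr (by exact_mod_cast hmn)
  have hpi := Real.pi_ne_zero
  push_cast
  rw [div_eq_div_iff hne hpi]
  linear_combination hk
end

section
/- Let 0 < φ < π/2, set b₁ = cos φ and b₂ = sin φ, let Γ = ℤ(1,0) + ℤ(b₁,b₂) ⊂ ℝ², and let R_φ be the rotation of ℝ² through angle φ. If the intersection Γ ∩ R_φΓ contains a point that does not lie in ℤ(b₁,b₂), then cos φ is rational, i.e. cos φ = p/q for some integers p, q. -/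
/-- Let `0 < φ < π/2`, `b₁ = cos φ`, `b₂ = sin φ`,
`Γ = ℤ(1,0) + ℤ(b₁,b₂)`, and let `R_φ` be the rotation through `φ`.
If `Γ ∩ R_φΓ` contains a point not lying in `ℤ(b₁,b₂)`, then `cos φ` is rational,
i.e. `cos φ = p/q` for some integers `p, q`. -/
theorem coincidence_forces_rational_cos
    (φ : ℝ) (hφ₁ : 0 < φ) (hφ₂ : φ < Real.pi / 2)
    (b₁ b₂ : ℝ) (hb₁ : b₁ = Real.cos φ) (hb₂ : b₂ = Real.sin φ)
    (Γ : Set (ℝ × ℝ))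
    (hΓ : Γ = {x | ∃ m n : ℤ, x = (m : ℝ) • ((1 : ℝ), (0 : ℝ)) + (n : ℝ) • (b₁, b₂)})
    (hx : ∃ x, x ∈ Γ ∧ x ∈ rot2 φ '' Γ ∧ ¬∃ n : ℤ, x = (n : ℝ) • (b₁, b₂)) :
    ∃ p q : ℤ, q ≠ 0 ∧ Real.cos φ = (p : ℝ) / (q : ℝ) := by
  obtain ⟨x, hx1, ⟨y, hy, hyx⟩, hn⟩ := hx
  subst hb₁ hb₂ hΓ
  obtain ⟨m, n, h1⟩ := hx1
  obtain ⟨k, l, h2⟩ := hy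
  have hs : 0 < Real.sin φ := Real.sin_pos_of_pos_of_lt_pi hφ₁ (by linarith [Real.pi_pos])
  have h3 := hyx.trans h1
  rw [h2] at h3
  simp only [rot2, Prod.ext_iff, Prod.fst_add, Prod.snd_add, Prod.smul_fst, Prod.smul_snd,
    smul_eq_mul] at h3
  obtain ⟨e1, e2⟩ := h3
  have e3 : (n : ℝ) - k = 2 * l * Real.cos φ := by
    apply mul_left_cancel₀ hs.ne'
    linarith
  have hl : l ≠ 0 := by
    rintro rfl
    have hnk : (n : ℝ) = k := by
      simp at e3
      linarith
    have hm : (m : ℝ) = 0 := by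
      rw [hnk] at e1
      simp at e1
      linarith
    exact hn ⟨n, by rw [h1, hm]; simp⟩
  have hl' : (l : ℝ) ≠ 0 := by exact_mod_cast hl
  refine ⟨n - k, 2 * l, by simpa using hl, ?_⟩
  push_cast
  rw [e3]
  field_simp
end

section
/- Let φ ∈ ℝ with φ/π irrational, let R_φ be the rotation of ℝ² through angle φ, and let Γ* be a lattice in ℝ² (the ℤ-span of an ℝ-basis). Then the closure of ⋃_{m∈ℤ} R_φ^m Γ* equals the union of the concentric circles about the origin whose radii are norms of lattice points: cl( ⋃_{m∈ℤ} R_φ^m Γ* ) = { x ∈ ℝ² : ‖x‖ = ‖k‖ for some k ∈ Γ* }. -/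
/-- Build a point of Euclidean `ℝ²` from two coordinates. -/
noncomputable def mkE2 (x y : ℝ) : EuclideanSpace ℝ (Fin 2) :=
  (WithLp.equiv 2 (Fin 2 → ℝ)).symm ![x, y]

/-- The rotation of Euclidean `ℝ²` through angle `θ` about the origin. -/
noncomputable def rotE2 (θ : ℝ) (p : EuclideanSpace ℝ (Fin 2)) : EuclideanSpace ℝ (Fin 2) :=
  mkE2 (Real.cos θ * p 0 - Real.sin θ * p 1) (Real.sin θ * p 0 + Real.cos θ * p 1)

theorem rotE2_apply_zero (θ : ℝ) (p : EuclideanSpace ℝ (Fin 2)) :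
    rotE2 θ p 0 = Real.cos θ * p 0 - Real.sin θ * p 1 := by
  simp [rotE2, mkE2]

theorem rotE2_apply_one (θ : ℝ) (p : EuclideanSpace ℝ (Fin 2)) :
    rotE2 θ p 1 = Real.sin θ * p 0 + Real.cos θ * p 1 := by
  simp [rotE2, mkE2]

theorem norm_rotE2 (θ : ℝ) (p : EuclideanSpace ℝ (Fin 2)) : ‖rotE2 θ p‖ = ‖p‖ := by
  rw [EuclideanSpace.norm_eq, EuclideanSpace.norm_eq]
  congr 1
  simp only [Fin.sum_univ_two, Real.norm_eq_abs, sq_abs, rotE2_apply_zero, rotE2_apply_one]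
  linear_combination (p 0 ^ 2 + p 1 ^ 2) * Real.sin_sq_add_cos_sq θ

theorem continuous_rotE2 (p : EuclideanSpace ℝ (Fin 2)) :
    Continuous (fun θ : ℝ => rotE2 θ p) := by
  refine (PiLp.continuous_toLp 2 _).comp (continuous_pi fun i => ?_)
  fin_cases i
  · simp; fun_prop
  · simp; fun_prop

theorem exists_rotE2_eq (x k : EuclideanSpace ℝ (Fin 2)) (h : ‖x‖ = ‖k‖) :
    ∃ θ : ℝ, rotE2 θ k = x := by
  have h2 : x 0 ^ 2 + x 1 ^ 2 = k 0 ^ 2 + k 1 ^ 2 := by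
    have := congrArg (fun t => t ^ 2) h
    simpa [EuclideanSpace.norm_sq_eq, Fin.sum_univ_two] using this
  by_cases hk : k 0 ^ 2 + k 1 ^ 2 = 0
  · refine ⟨0, ?_⟩
    rw [hk] at h2
    have hx0 : x 0 = 0 := by nlinarith [sq_nonneg (x 0), sq_nonneg (x 1)]
    have hx1 : x 1 = 0 := by nlinarith [sq_nonneg (x 0), sq_nonneg (x 1)]
    have hk0 : k 0 = 0 := by nlinarith [sq_nonneg (k 0), sq_nonneg (k 1)]
    have hk1 : k 1 = 0 := by nlinarith [sq_nonneg (k 0), sq_nonneg (k 1)]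
    ext i
    fin_cases i
    · simp [rotE2_apply_zero, hx0, hk0]
    · simp [rotE2_apply_one, hx1, hk1]
  · set N := k 0 ^ 2 + k 1 ^ 2 with hN
    set c := (x 0 * k 0 + x 1 * k 1) / N with hc
    set s := (x 1 * k 0 - x 0 * k 1) / N with hs
    have hcs : c ^ 2 + s ^ 2 = 1 := by
      have : (x 0 * k 0 + x 1 * k 1) ^ 2 + (x 1 * k 0 - x 0 * k 1) ^ 2 = N ^ 2 := by
        linear_combination N * h2 + (x 0 ^ 2 + x 1 ^ 2) * (-hN)
      rw [hc, hs, div_pow, div_pow, ← add_div, this, div_self (pow_ne_zero 2 hk)]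
    set z : ℂ := ⟨c, s⟩ with hz
    have hz1 : ‖z‖ = 1 := by
      rw [Complex.norm_def, Complex.normSq_apply, Real.sqrt_eq_one]
      simp only [hz]; linarith
    have hz0 : z ≠ 0 := by
      intro h0; rw [h0] at hz1; simp at hz1
    have hcos : Real.cos z.arg = c := by rw [Complex.cos_arg hz0, hz1, div_one]
    have hsin : Real.sin z.arg = s := by rw [Complex.sin_arg, hz1, div_one]
    refine ⟨z.arg, ?_⟩
    ext i
    fin_cases i
    · simp only [Fin.zero_eta, rotE2_apply_zero, hcos, hsin, hc, hs]
      field_simp; rw [hN]; ring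
    · simp only [Fin.mk_one, rotE2_apply_one, hcos, hsin, hc, hs]
      field_simp; rw [hN]; ring

theorem isClosed_lattice (a b : EuclideanSpace ℝ (Fin 2)) (hab : LinearIndependent ℝ ![a, b]) :
    IsClosed {x | ∃ m n : ℤ, x = (m : ℝ) • a + (n : ℝ) • b} := by
  let L : (Fin 2 → ℝ) →ₗ[ℝ] EuclideanSpace ℝ (Fin 2) := Fintype.linearCombination ℝ ![a, b]
  have hL : LinearMap.ker L = ⊥ := by
    rw [LinearMap.ker_eq_bot]
    exact hab.fintypeLinearCombination_injective
  have hc := LinearMap.isClosedEmbedding_of_injective hL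
  have hZ : IsClosed (Set.univ.pi fun _ : Fin 2 => Set.range ((↑) : ℤ → ℝ)) :=
    isClosed_set_pi fun _ _ => Int.isClosedEmbedding_coe_real.isClosed_range
  convert hc.isClosedMap _ hZ using 1
  ext x
  constructor
  · rintro ⟨m, n, rfl⟩
    refine ⟨![m, n], ?_, ?_⟩
    · intro i _
      fin_cases i <;> simp
    · simp [L, Fintype.linearCombination_apply]
  · rintro ⟨v, hv, rfl⟩
    obtain ⟨m, hm⟩ := hv 0 trivial
    obtain ⟨n, hn⟩ := hv 1 trivial
    exact ⟨m, n, by simp [L, Fintype.linearCombination_apply, hm, hn]⟩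

theorem isClosed_circles (S : Set (EuclideanSpace ℝ (Fin 2))) (hS : IsClosed S) :
    IsClosed {x : EuclideanSpace ℝ (Fin 2) | ∃ k ∈ S, ‖x‖ = ‖k‖} := by
  have hp : IsProperMap (fun x : EuclideanSpace ℝ (Fin 2) => ‖x‖) :=
    isProperMap_iff_tendsto_cocompact.mpr
      ⟨continuous_norm, (tendsto_norm_cocompact_atTop).mono_right atTop_le_cocompact⟩
  have := (hp.isClosedMap S hS).preimage (continuous_norm (E := EuclideanSpace ℝ (Fin 2)))
  refine (congrArg IsClosed (Set.ext fun x => ?_)).mpr this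
  exact exists_congr fun k => and_congr_right fun _ => eq_comm

/-- If `φ/π` is irrational and `Γ*` is a lattice in `ℝ²`, then the
closure of `⋃_{m∈ℤ} R_φ^m Γ*` equals the union of the concentric circles about the
origin with radii the norms of lattice points:
`cl(⋃_{m∈ℤ} R_φ^m Γ*) = {x : ‖x‖ = ‖k‖ for some k ∈ Γ*}`. -/
theorem closure_rotated_lattice_eq_circles
    (φ : ℝ) (hφ : Irrational (φ / Real.pi))
    (a b : EuclideanSpace ℝ (Fin 2)) (hab : LinearIndependent ℝ ![a, b])
    (Γstar : Set (EuclideanSpace ℝ (Fin 2)))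
    (hΓstar : Γstar = {x | ∃ m n : ℤ, x = (m : ℝ) • a + (n : ℝ) • b}) :
    closure (⋃ m : ℤ, rotE2 (m * φ) '' Γstar)
      = {x | ∃ k ∈ Γstar, ‖x‖ = ‖k‖} := by
  apply Set.Subset.antisymm
  · refine closure_minimal ?_ (isClosed_circles _ (hΓstar ▸ isClosed_lattice a b hab))
    intro x hx
    obtain ⟨m, k, hk, rfl⟩ := Set.mem_iUnion.mp hx
    exact ⟨k, hk, norm_rotE2 _ _⟩
  · rintro x ⟨k, hk, hxk⟩
    obtain ⟨θ, rfl⟩ := exists_rotE2_eq x k hxk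
    have hirr : Irrational (φ / (2 * Real.pi)) := by
      have := hφ.div_natCast (m := 2) (by norm_num)
      convert this using 1
      push_cast
      field_simp
    have hd := dense_addSubgroupClosure_pair_iff.mpr hirr
    have hm := image_closure_subset_closure_image (continuous_rotE2 k)
      (Set.mem_image_of_mem _ (hd θ))
    refine closure_mono ?_ hm
    rintro _ ⟨t, ht, rfl⟩
    obtain ⟨m, n, rfl⟩ := AddSubgroup.mem_closure_pair.mp ht
    refine Set.mem_iUnion.mpr ⟨m, k, hk, ?_⟩
    simp only [rotE2, zsmul_eq_mul, Real.cos_add_int_mul_two_pi, Real.sin_add_int_mul_two_pi]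
end

section
/- Let Γ be a lattice in ℝ² (the ℤ-span of an ℝ-basis), regarded as a subset of ℝ³ via the embedding (x₁,x₂) ↦ (x₁,x₂,0). Let R : ℝ³ → ℝ³ be a rotation about the axis ℝe₃ (so R fixes e₃ and preserves the plane ℝ²×{0}), let c > 0 and c₀ = (0,0,c), and let (v_k)_{k∈ℤ} be vectors in ℝ²×{0} satisfying v_{k+i} − v_k = R^k(v_i − v_0) for all k, i ∈ ℤ. Define Λ = ⋃_{k∈ℤ} ( R^k Γ + v_k + k c₀ ). Then R(Λ − Λ) = Λ − Λ. -/
/-- The rotation of `ℝ³` through angle `θ` about the axis `ℝe₃`: it rotates the first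
two coordinates by `θ` and fixes the third coordinate. -/
noncomputable def rot3 (θ : ℝ) (x : ℝ × ℝ × ℝ) : ℝ × ℝ × ℝ :=
  (Real.cos θ * x.1 - Real.sin θ * x.2.1,
   Real.sin θ * x.1 + Real.cos θ * x.2.1,
   x.2.2)

/-- The embedding `ℝ² → ℝ³`, `(x₁,x₂) ↦ (x₁,x₂,0)`. -/
def emb (p : ℝ × ℝ) : ℝ × ℝ × ℝ := (p.1, p.2, 0)

theorem rot3_rot3 (s t : ℝ) (x : ℝ × ℝ × ℝ) : rot3 s (rot3 t x) = rot3 (s + t) x := by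
  simp only [rot3, Real.cos_add, Real.sin_add, Prod.mk.injEq, and_true]
  constructor <;> ring

theorem rot3_sub (s : ℝ) (x y : ℝ × ℝ × ℝ) : rot3 s (x - y) = rot3 s x - rot3 s y := by
  ext <;> simp [rot3] <;> ring

theorem rot3_add (s : ℝ) (x y : ℝ × ℝ × ℝ) : rot3 s (x + y) = rot3 s x + rot3 s y := by
  ext <;> simp [rot3] <;> ring

theorem rot3_axis (s k c : ℝ) :
    rot3 s (k • ((0 : ℝ), (0 : ℝ), c)) = k • ((0 : ℝ), (0 : ℝ), c) := by
  simp [rot3]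

/-- Let `Γ = ℤa + ℤb` be a planar lattice, embedded in `ℝ³` via
`(x₁,x₂) ↦ (x₁,x₂,0)`; let `R = rot3 θ` be a rotation about the axis `ℝe₃`
(so `R^k = rot3 (kθ)`), `c > 0`, `c₀ = (0,0,c)`, and let `(v_k)_{k∈ℤ}` be vectors in
`ℝ²×{0}` with `v_{k+i} − v_k = R^k(v_i − v_0)` for all `k, i ∈ ℤ`.  For
`Λ = ⋃_{k∈ℤ} (R^k Γ + v_k + k c₀)` one has `R(Λ − Λ) = Λ − Λ`. -/
theorem scd_difference_set_rotation_invariant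
    (a b : ℝ × ℝ) (hab : LinearIndependent ℝ ![a, b])
    (θ c : ℝ) (hc : 0 < c)
    (v : ℤ → ℝ × ℝ × ℝ)
    (hv0 : ∀ k : ℤ, (v k).2.2 = 0)
    (hv : ∀ k i : ℤ, v (k + i) - v k = rot3 (k * θ) (v i - v 0))
    (Λ : Set (ℝ × ℝ × ℝ))
    (hΛ : Λ = {z | ∃ k m n : ℤ,
      z = rot3 (k * θ) (emb ((m : ℝ) • a + (n : ℝ) • b)) + v k + (k : ℝ) • ((0 : ℝ), (0 : ℝ), c)}) :
    rot3 θ '' {z | ∃ x ∈ Λ, ∃ y ∈ Λ, z = x - y}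
      = {z | ∃ x ∈ Λ, ∃ y ∈ Λ, z = x - y} := by
  have key : ∀ (j : ℤ) (z : ℝ × ℝ × ℝ), (∃ x ∈ Λ, ∃ y ∈ Λ, z = x - y) →
      ∃ x ∈ Λ, ∃ y ∈ Λ, rot3 (j * θ) z = x - y := by
    subst hΛ
    rintro j z ⟨x, ⟨k, m, n, rfl⟩, y, ⟨k', m', n', rfl⟩, rfl⟩
    refine ⟨_, ⟨j + k, m, n, rfl⟩, _, ⟨j + k', m', n', rfl⟩, ?_⟩
    have h1 := hv j k
    have h2 := hv j k'
    rw [rot3_sub, sub_eq_iff_eq_add] at h1 h2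
    rw [h1, h2]
    simp only [rot3_sub, rot3_add, rot3_rot3, rot3_axis, Int.cast_add, add_mul, add_smul]
    abel
  ext z
  constructor
  · rintro ⟨w, hw, rfl⟩
    have := key 1 w hw
    simpa using this
  · intro hz
    refine ⟨rot3 (((-1 : ℤ) : ℝ) * θ) z, key (-1) z hz, ?_⟩
    rw [rot3_rot3]
    simp [rot3]
end
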